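/- arXiv:1505.06834 — 9 statements merged into one kernel-verified Lean document; each statement's English description precedes it below -/
import Mathlib

section
/- Let γ₁, γ₂ : [0,∞) → ℝ be C¹ functions with γ₁(s) > 0 for every s ≥ 0 and satisfying the Euclidean arc-length condition γ₁'(s)² + γ₂'(s)² = 1 for all s ≥ 0. Then ∫₀^∞ 1/γ₁(s) ds = +∞ (the integral diverges). Consequently every complete end of revolution in ℝ³ is a parabolic end. -/
open MeasureTheory Set

open Asymptotics Filter NNReal

/-! By the arc-length condition the radius `γ₁` is 1-Lipschitz, so it grows at most linearly, and
`1 / γ₁` is eventually bounded below by a positive multiple of the non-integrable function `1 / s`.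
-/

theorem lipschitzOnWith_one_of_deriv_sq_add_sq_le_one {f f' g' : ℝ → ℝ} {s : Set ℝ}
    (hs : Convex ℝ s) (hf : ∀ x ∈ s, HasDerivWithinAt f (f' x) s x)
    (hspeed : ∀ x ∈ s, f' x ^ 2 + g' x ^ 2 ≤ 1) : LipschitzOnWith 1 f s := by
  refine hs.lipschitzOnWith_of_nnnorm_hasDerivWithin_le hf fun x hx ↦ ?_
  have hsq : f' x ^ 2 ≤ 1 := (le_add_of_nonneg_right (sq_nonneg _)).trans (hspeed x hx)
  exact (sq_le_one_iff_abs_le_one (f' x)).1 hsq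

theorem isBigO_id_atTop_of_lipschitzOnWith_Ici {E : Type*} [SeminormedAddCommGroup E]
    {f : ℝ → E} {K : ℝ≥0} {a : ℝ} (hf : LipschitzOnWith K f (Ici a)) :
    f =O[atTop] (id : ℝ → ℝ) := by
  have hsub_id : (fun s : ℝ ↦ s - a) =O[atTop] (id : ℝ → ℝ) :=
    (isBigO_refl _ _).sub (isLittleO_const_id_atTop a).isBigO
  have hsub : (fun s ↦ f s - f a) =O[atTop] (fun s ↦ s - a) :=
    .of_bound K <| (eventually_ge_atTop a).mono fun s hs ↦ hf.norm_sub_le hs self_mem_Ici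
  have hconst : (fun _ ↦ f a) =O[atTop] (id : ℝ → ℝ) :=
    (isLittleO_const_id_atTop ‖f a‖).isBigO.of_norm_left
  simpa only [sub_add_cancel] using (hsub.trans hsub_id).add hconst

theorem lintegral_Ioi_ofReal_inv_eq_top (a : ℝ) :
    ∫⁻ s in Ioi a, ENNReal.ofReal s⁻¹ = ⊤ := by
  by_contra hfinite
  have htail : ∫⁻ s in Ioi (max a 0), ENNReal.ofReal s⁻¹ ≠ ⊤ :=
    ne_top_of_le_ne_top hfinite (lintegral_mono_set (Ioi_subset_Ioi (le_max_left a 0)))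
  have hnonneg : ∀ᵐ s ∂volume.restrict (Ioi (max a 0)), 0 ≤ s⁻¹ :=
    ae_restrict_of_forall_mem measurableSet_Ioi fun s hs ↦
      inv_nonneg.2 ((le_max_right a 0).trans (mem_Ioi.1 hs).le)
  exact not_integrableOn_Ioi_inv <|
    (lintegral_ofReal_ne_top_iff_integrable measurable_inv.aestronglyMeasurable hnonneg).1 htail

theorem end_of_revolution_R3_parabolic_general {w : ℝ → ℝ} (a : ℝ)
    (hpos : ∀ᶠ s in atTop, 0 < w s) (hw : w =O[atTop] (id : ℝ → ℝ)) :
    ∫⁻ s in Ioi a, ENNReal.ofReal (1 / w s) = ⊤ := by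
  obtain ⟨C, hC, hbound⟩ := hw.exists_pos
  have hlower : ∀ᶠ s in atTop, C⁻¹ * s⁻¹ ≤ 1 / w s := by
    filter_upwards [hpos, hbound.bound, eventually_ge_atTop 0] with s hws hle hs
    rw [← mul_inv, ← one_div]
    exact one_div_le_one_div_of_le hws <| by
      simpa [abs_of_pos hws, abs_of_nonneg hs] using hle
  obtain ⟨b, hb⟩ := eventually_atTop.1 hlower
  refine top_le_iff.1 ?_
  calc
    ⊤ = ENNReal.ofReal C⁻¹ * ∫⁻ s in Ioi (max a b), ENNReal.ofReal s⁻¹ := by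
      rw [lintegral_Ioi_ofReal_inv_eq_top,
        ENNReal.mul_top (ENNReal.ofReal_pos.2 (inv_pos.2 hC)).ne']
    _ = ∫⁻ s in Ioi (max a b), ENNReal.ofReal (C⁻¹ * s⁻¹) := by
      simp_rw [ENNReal.ofReal_mul (inv_pos.2 hC).le,
        lintegral_const_mul' _ _ ENNReal.ofReal_ne_top]
    _ ≤ ∫⁻ s in Ioi (max a b), ENNReal.ofReal (1 / w s) :=
      setLIntegral_mono' measurableSet_Ioi fun s hs ↦
        ENNReal.ofReal_le_ofReal (hb s ((le_max_right a b).trans (mem_Ioi.1 hs).le))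
    _ ≤ ∫⁻ s in Ioi a, ENNReal.ofReal (1 / w s) :=
      lintegral_mono_set (Ioi_subset_Ioi (le_max_left a b))

/-- Euclidean case: the profile curve of a complete end of revolution in ℝ³,
parametrized by Euclidean arc length, has `∫₀^∞ 1/γ₁ = ∞`, hence the end is parabolic. -/
theorem end_of_revolution_R3_parabolic
    (γ₁ γ₂ γ₁' γ₂' : ℝ → ℝ)
    (hpos : ∀ s ∈ Ici (0:ℝ), 0 < γ₁ s)
    (hd1 : ∀ s ∈ Ici (0:ℝ), HasDerivAt γ₁ (γ₁' s) s)
    (hd2 : ∀ s ∈ Ici (0:ℝ), HasDerivAt γ₂ (γ₂' s) s)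
    (hc1 : ContinuousOn γ₁' (Ici (0:ℝ)))
    (hc2 : ContinuousOn γ₂' (Ici (0:ℝ)))
    (harc : ∀ s ∈ Ici (0:ℝ), (γ₁' s) ^ 2 + (γ₂' s) ^ 2 = 1) :
    ∫⁻ s in Ioi (0:ℝ), ENNReal.ofReal (1 / γ₁ s) = ⊤ := by
  have hlip : LipschitzOnWith 1 γ₁ (Ici 0) := lipschitzOnWith_one_of_deriv_sq_add_sq_le_one
    (convex_Ici 0) (fun s hs ↦ (hd1 s hs).hasDerivWithinAt) fun s hs ↦ (harc s hs).le
  exact end_of_revolution_R3_parabolic_general 0 ((eventually_ge_atTop 0).mono hpos)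
    (isBigO_id_atTop_of_lipschitzOnWith_Ici hlip)
end

section
/- Let γ₁, γ₂ : [0,∞) → ℝ be C¹ functions with γ₁(s) > 0 for every s ≥ 0 and satisfying the spherical arc-length condition 4(γ₁'(s)² + γ₂'(s)²) = (1 + γ₁(s)² + γ₂(s)²)² for all s ≥ 0. Then ∫₀^∞ (1 + γ₁(s)² + γ₂(s)²)/(2 γ₁(s)) ds = +∞ (the integral diverges). Consequently every complete end of revolution in S³ is a parabolic end. -/
open MeasureTheory Set

/-!
The orbit of a point of S³ under the rotations about an axis is a Euclidean circle inside the unit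
sphere of ℝ⁴, so its radius, which is the warping function of the end, is at most `1`. As the end
has infinite length, integrating `1 ≤ 1 / w₁` along it gives the divergence.
-/

/-- The warping function `w₁` of an end of revolution in S³: the length divided by `2π`, for the
metric `4(dx₁² + dx₂² + dx₃²)/(1 + x₁² + x₂² + x₃²)²`, of the orbit of the point `(x, 0, y)` under
the rotations about the `x₃`-axis. It is a function of the point, to be evaluated along the profile
curve, and it is signed: negative for `x < 0`. -/
noncomputable def sphericalWarping (x y : ℝ) : ℝ :=
  2 * x / (1 + x ^ 2 + y ^ 2)

theorem sphericalWarping_pos {x : ℝ} (hx : 0 < x) (y : ℝ) : 0 < sphericalWarping x y := by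
  unfold sphericalWarping
  positivity

theorem sphericalWarping_le_one (x y : ℝ) : sphericalWarping x y ≤ 1 := by
  refine div_le_one_of_le₀ ?_ (by positivity)
  calc 2 * x ≤ 1 + x ^ 2 := by simpa [add_comm] using two_mul_le_add_sq x 1
    _ ≤ 1 + x ^ 2 + y ^ 2 := le_add_of_nonneg_right (sq_nonneg y)

theorem inv_sphericalWarping (x y : ℝ) :
    (sphericalWarping x y)⁻¹ = (1 + x ^ 2 + y ^ 2) / (2 * x) :=
  inv_div _ _

section InfiniteMeasure

variable {α : Type*} [MeasurableSpace α] {μ : Measure α}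

theorem lintegral_ofReal_inv_eq_top_of_le {w : α → ℝ} {C : ℝ} (hμ : μ univ = ⊤)
    (hw_pos : ∀ᵐ a ∂μ, 0 < w a) (hw_le : ∀ᵐ a ∂μ, w a ≤ C) :
    ∫⁻ a, ENNReal.ofReal (w a)⁻¹ ∂μ = ⊤ := by
  have : NeZero μ := ⟨fun h => by simp [h] at hμ⟩
  obtain ⟨a, ha_pos, ha_le⟩ := (hw_pos.and hw_le).exists
  have hC : 0 < C := ha_pos.trans_le ha_le
  refine top_unique ?_
  calc ⊤ = ∫⁻ _, ENNReal.ofReal C⁻¹ ∂μ := by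
        rw [lintegral_const, hμ, ENNReal.mul_top (ENNReal.ofReal_pos.2 (inv_pos.2 hC)).ne']
    _ ≤ ∫⁻ a, ENNReal.ofReal (w a)⁻¹ ∂μ := by
        refine lintegral_mono_ae ?_
        filter_upwards [hw_pos, hw_le] with a ha_pos ha_le
        exact ENNReal.ofReal_le_ofReal (inv_anti₀ ha_pos ha_le)

theorem end_of_revolution_S3_parabolic_general {γ₁ γ₂ : α → ℝ} (hμ : μ univ = ⊤)
    (hpos : ∀ᵐ s ∂μ, 0 < γ₁ s) :
    ∫⁻ s, ENNReal.ofReal ((1 + (γ₁ s) ^ 2 + (γ₂ s) ^ 2) / (2 * γ₁ s)) ∂μ = ⊤ := by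
  simp only [← inv_sphericalWarping]
  exact lintegral_ofReal_inv_eq_top_of_le hμ
    (hpos.mono fun s hs => sphericalWarping_pos hs (γ₂ s))
    (ae_of_all μ fun s => sphericalWarping_le_one (γ₁ s) (γ₂ s))

end InfiniteMeasure

/-- Spherical case: the profile curve of a complete end of revolution in S³
(in the conformal model), parametrized by arc length, has
`∫₀^∞ (1+γ₁²+γ₂²)/(2γ₁) = ∞`, hence the end is parabolic. -/
theorem end_of_revolution_S3_parabolic
    (γ₁ γ₂ γ₁' γ₂' : ℝ → ℝ)
    (hpos : ∀ s ∈ Ici (0:ℝ), 0 < γ₁ s)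
    (hd1 : ∀ s ∈ Ici (0:ℝ), HasDerivAt γ₁ (γ₁' s) s)
    (hd2 : ∀ s ∈ Ici (0:ℝ), HasDerivAt γ₂ (γ₂' s) s)
    (hc1 : ContinuousOn γ₁' (Ici (0:ℝ)))
    (hc2 : ContinuousOn γ₂' (Ici (0:ℝ)))
    (harc : ∀ s ∈ Ici (0:ℝ),
      4 * ((γ₁' s) ^ 2 + (γ₂' s) ^ 2) = (1 + (γ₁ s) ^ 2 + (γ₂ s) ^ 2) ^ 2) :
    ∫⁻ s in Ioi (0:ℝ),
      ENNReal.ofReal ((1 + (γ₁ s) ^ 2 + (γ₂ s) ^ 2) / (2 * γ₁ s)) = ⊤ :=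
  end_of_revolution_S3_parabolic_general (by rw [Measure.restrict_apply_univ, Real.volume_Ioi])
    (ae_restrict_of_forall_mem measurableSet_Ioi fun s hs => hpos s (Ioi_subset_Ici_self hs))
end

section
/- Let γ₁, γ₂ : [0,∞) → ℝ be C¹ functions with γ₁(s) > 0 and γ₂(s) > 0 for all s ≥ 0, satisfying the hyperbolic arc-length condition (γ₁'(s)² + γ₂'(s)²)/γ₂(s)² = 1 for all s ≥ 0. If there is z > 0 such that γ₂(s) ≥ z for all s ≥ 0 (the end lies on or above the horosphere {x₃ = z}), then ∫₀^∞ γ₂(s)/γ₁(s) ds = +∞. Consequently every complete end of revolution in ℍ³ contained on the horosphere {x₃ = z} (or inside the horoball {x₃ ≥ z}) is parabolic. -/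
open MeasureTheory Set

/-! Arc length gives `γ₁' ≤ γ₂`, that is `(log γ₁)' ≤ γ₂ / γ₁`. If `∫ γ₂ / γ₁` were finite, `log γ₁`
and hence `γ₁` would be bounded, say by `M`, so that `∫ γ₂ ≤ M ∫ γ₂ / γ₁ < ∞`. But `∫ γ₂` is the
Euclidean length of the profile, and it is infinite as soon as `γ₂` is bounded away from zero. -/

section LogarithmicGrowth

variable {f g g' : ℝ → ℝ} {a b : ℝ}

lemma log_sub_log_le_integral_div (hab : a ≤ b) (hg : ContinuousOn g (Icc a b))
    (hpos : ∀ s ∈ Icc a b, 0 < g s)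
    (hderiv : ∀ s ∈ Ioo a b, HasDerivWithinAt g (g' s) (Ioi s) s)
    (hle : ∀ s ∈ Ioo a b, g' s ≤ f s)
    (hint : IntegrableOn (fun s => f s / g s) (Icc a b)) :
    Real.log (g b) - Real.log (g a) ≤ ∫ s in a..b, f s / g s :=
  intervalIntegral.sub_le_integral_of_hasDeriv_right_of_le hab
    (hg.log fun s hs => (hpos s hs).ne')
    (fun s hs => (hderiv s hs).log (hpos s (Ioo_subset_Icc_self hs)).ne')
    hint
    (fun s hs => div_le_div_of_nonneg_right (hle s hs) (hpos s (Ioo_subset_Icc_self hs)).le)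

lemma le_mul_exp_integral_div (hg : ContinuousOn g (Ici a)) (hpos : ∀ s ∈ Ici a, 0 < g s)
    (hderiv : ∀ s ∈ Ioi a, HasDerivWithinAt g (g' s) (Ioi s) s)
    (hf : ∀ s ∈ Ioi a, 0 ≤ f s) (hle : ∀ s ∈ Ioi a, g' s ≤ f s)
    (hint : IntegrableOn (fun s => f s / g s) (Ioi a)) (hab : a ≤ b) :
    g b ≤ g a * Real.exp (∫ s in Ioi a, f s / g s) := by
  have hnonneg : 0 ≤ᵐ[volume.restrict (Ioi a)] fun s => f s / g s :=
    ae_restrict_of_forall_mem measurableSet_Ioi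
      fun s hs => div_nonneg (hf s hs) (hpos s (Ioi_subset_Ici_self hs)).le
  have hlog : Real.log (g b) - Real.log (g a) ≤ ∫ s in Ioi a, f s / g s :=
    calc Real.log (g b) - Real.log (g a)
        ≤ ∫ s in a..b, f s / g s :=
          log_sub_log_le_integral_div hab (hg.mono Icc_subset_Ici_self)
            (fun s hs => hpos s hs.1) (fun s hs => hderiv s hs.1) (fun s hs => hle s hs.1)
            ((Iff.mpr integrableOn_Ici_iff_integrableOn_Ioi hint).mono_set Icc_subset_Ici_self)
      _ = ∫ s in Ioc a b, f s / g s := intervalIntegral.integral_of_le hab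
      _ ≤ ∫ s in Ioi a, f s / g s :=
          setIntegral_mono_set hint hnonneg Ioc_subset_Ioi_self.eventuallyLE
  have ha : 0 < g a := hpos a self_mem_Ici
  rwa [← Real.log_div (hpos b hab).ne' ha.ne',
    Real.log_le_iff_le_exp (div_pos (hpos b hab) ha), div_le_iff₀' ha] at hlog

theorem setLIntegral_ofReal_div_eq_top_of_deriv_le
    (hg : ContinuousOn g (Ici a)) (hpos : ∀ s ∈ Ici a, 0 < g s)
    (hderiv : ∀ s ∈ Ioi a, HasDerivWithinAt g (g' s) (Ioi s) s)
    (hfm : AEMeasurable f (volume.restrict (Ioi a)))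
    (hf : ∀ s ∈ Ioi a, 0 ≤ f s) (hle : ∀ s ∈ Ioi a, g' s ≤ f s)
    (hinf : ∫⁻ s in Ioi a, ENNReal.ofReal (f s) = ⊤) :
    ∫⁻ s in Ioi a, ENNReal.ofReal (f s / g s) = ⊤ := by
  by_contra hfin
  have hint : IntegrableOn (fun s => f s / g s) (Ioi a) := by
    have hgm : AEMeasurable g (volume.restrict (Ioi a)) :=
      (hg.mono Ioi_subset_Ici_self).aemeasurable measurableSet_Ioi
    refine (lintegral_ofReal_ne_top_iff_integrable (hfm.div hgm).aestronglyMeasurable ?_).1 hfin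
    exact ae_restrict_of_forall_mem measurableSet_Ioi
      fun s hs => div_nonneg (hf s hs) (hpos s (Ioi_subset_Ici_self hs)).le
  set M := g a * Real.exp (∫ s in Ioi a, f s / g s)
  have hbound : ∀ s ∈ Ioi a, f s ≤ M * (f s / g s) := fun s hs =>
    have hs' : s ∈ Ici a := Ioi_subset_Ici_self hs
    calc f s = g s * (f s / g s) := (mul_div_cancel₀ (f s) (hpos s hs').ne').symm
      _ ≤ M * (f s / g s) := mul_le_mul_of_nonneg_right
          (le_mul_exp_integral_div hg hpos hderiv hf hle hint hs')
          (div_nonneg (hf s hs) (hpos s hs').le)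
  have hM : 0 ≤ M := mul_nonneg (hpos a self_mem_Ici).le (Real.exp_pos _).le
  refine hinf.not_lt ?_
  calc ∫⁻ s in Ioi a, ENNReal.ofReal (f s)
      ≤ ∫⁻ s in Ioi a, ENNReal.ofReal M * ENNReal.ofReal (f s / g s) :=
        setLIntegral_mono' measurableSet_Ioi fun s hs =>
          (ENNReal.ofReal_le_ofReal (hbound s hs)).trans_eq (ENNReal.ofReal_mul hM)
    _ = ENNReal.ofReal M * ∫⁻ s in Ioi a, ENNReal.ofReal (f s / g s) :=
        lintegral_const_mul' _ _ ENNReal.ofReal_ne_top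
    _ < ⊤ := ENNReal.mul_lt_top ENNReal.ofReal_lt_top (lt_top_iff_ne_top.2 hfin)

end LogarithmicGrowth

lemma setLIntegral_ofReal_eq_top_of_le {α : Type*} [MeasurableSpace α] {μ : Measure α} {s : Set α}
    (hs : MeasurableSet s) (hμ : μ s = ⊤) {f : α → ℝ} {c : ℝ} (hc : 0 < c)
    (hf : ∀ x ∈ s, c ≤ f x) : ∫⁻ x in s, ENNReal.ofReal (f x) ∂μ = ⊤ := by
  refine eq_top_mono (setLIntegral_mono' hs fun x hx => ENNReal.ofReal_le_ofReal (hf x hx)) ?_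
  rw [setLIntegral_const, hμ, ENNReal.mul_top (ENNReal.ofReal_pos.2 hc).ne']

lemma abs_le_abs_of_sq_add_sq_div_sq_eq_one {x y r : ℝ} (hr : r ≠ 0)
    (h : (x ^ 2 + y ^ 2) / r ^ 2 = 1) : |x| ≤ |r| :=
  sq_le_sq.1 <| calc
    x ^ 2 ≤ x ^ 2 + y ^ 2 := le_add_of_nonneg_right (sq_nonneg y)
    _ = r ^ 2 := (div_eq_one_iff_eq (pow_ne_zero 2 hr)).1 h

theorem end_of_revolution_H3_on_horosphere_parabolic_general
    {γ₁ γ₂ γ₁' γ₂' : ℝ → ℝ}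
    (hpos1 : ∀ s ∈ Ici (0 : ℝ), 0 < γ₁ s)
    (hpos2 : ∀ s ∈ Ici (0 : ℝ), 0 < γ₂ s)
    (hd1 : ∀ s ∈ Ici (0 : ℝ), HasDerivAt γ₁ (γ₁' s) s)
    (hd2 : ∀ s ∈ Ici (0 : ℝ), HasDerivAt γ₂ (γ₂' s) s)
    (harc : ∀ s ∈ Ici (0 : ℝ), ((γ₁' s) ^ 2 + (γ₂' s) ^ 2) / (γ₂ s) ^ 2 = 1)
    (hlength : ∫⁻ s in Ioi (0 : ℝ), ENNReal.ofReal (γ₂ s) = ⊤) :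
    ∫⁻ s in Ioi (0 : ℝ), ENNReal.ofReal (γ₂ s / γ₁ s) = ⊤ := by
  have hcont1 : ContinuousOn γ₁ (Ici 0) := HasDerivAt.continuousOn hd1
  have hcont2 : ContinuousOn γ₂ (Ici 0) := HasDerivAt.continuousOn hd2
  have hspeed : ∀ s ∈ Ici (0 : ℝ), γ₁' s ≤ γ₂ s := fun s hs =>
    calc γ₁' s ≤ |γ₂ s| :=
          (le_abs_self _).trans (abs_le_abs_of_sq_add_sq_div_sq_eq_one (hpos2 s hs).ne' (harc s hs))
      _ = γ₂ s := abs_of_pos (hpos2 s hs)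
  exact setLIntegral_ofReal_div_eq_top_of_deriv_le hcont1 hpos1
    (fun s hs => (hd1 s (Ioi_subset_Ici_self hs)).hasDerivWithinAt)
    ((hcont2.mono Ioi_subset_Ici_self).aemeasurable measurableSet_Ioi)
    (fun s hs => (hpos2 s (Ioi_subset_Ici_self hs)).le)
    (fun s hs => hspeed s (Ioi_subset_Ici_self hs))
    hlength

/-- Hyperbolic case: an end of revolution in ℍ³ lying on or above the horosphere
`{x₃ = z}` (`γ₂ ≥ z > 0`) has `∫₀^∞ γ₂/γ₁ = ∞`, hence is parabolic. -/
theorem end_of_revolution_H3_on_horosphere_parabolic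
    (γ₁ γ₂ γ₁' γ₂' : ℝ → ℝ)
    (hpos1 : ∀ s ∈ Ici (0:ℝ), 0 < γ₁ s)
    (hpos2 : ∀ s ∈ Ici (0:ℝ), 0 < γ₂ s)
    (hd1 : ∀ s ∈ Ici (0:ℝ), HasDerivAt γ₁ (γ₁' s) s)
    (hd2 : ∀ s ∈ Ici (0:ℝ), HasDerivAt γ₂ (γ₂' s) s)
    (hc1 : ContinuousOn γ₁' (Ici (0:ℝ)))
    (hc2 : ContinuousOn γ₂' (Ici (0:ℝ)))
    (harc : ∀ s ∈ Ici (0:ℝ), ((γ₁' s) ^ 2 + (γ₂' s) ^ 2) / (γ₂ s) ^ 2 = 1)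
    (z : ℝ) (hz : 0 < z)
    (hhoro : ∀ s ∈ Ici (0:ℝ), z ≤ γ₂ s) :
    ∫⁻ s in Ioi (0:ℝ), ENNReal.ofReal (γ₂ s / γ₁ s) = ⊤ := by
  exact end_of_revolution_H3_on_horosphere_parabolic_general hpos1 hpos2 hd1 hd2 harc
    (setLIntegral_ofReal_eq_top_of_le measurableSet_Ioi Real.volume_Ioi hz
      fun s hs => hhoro s (Ioi_subset_Ici_self hs))
end

section
/- Let γ₁, γ₂ : [0,∞) → ℝ be C¹ functions with γ₁(s) > 0 and γ₂(s) > 0 for all s ≥ 0, satisfying the hyperbolic arc-length condition (γ₁'(s)² + γ₂'(s)²)/γ₂(s)² = 1 for all s ≥ 0. If ∫₀^∞ γ₂(s)/γ₁(s) ds < +∞ (the end is non-parabolic), then inf_{s ≥ 0} γ₂(s) = 0. Consequently every complete non-parabolic end of revolution in ℍ³ approaches the plane {x₃ = 0}. -/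
/-!
The arc-length condition makes the horizontal speed at most the height, `γ₁' ≤ γ₂`, so
`(log γ₁)' ≤ γ₂ / γ₁`. On a non-parabolic end the right-hand side is integrable, hence `γ₁` is
bounded. Then `γ₂ = γ₁ * (γ₂ / γ₁)` is integrable too, and a nonnegative integrable function on a
half-line has infimum zero.
-/

open MeasureTheory Set

section Gronwall

variable {f f' φ : ℝ → ℝ} {a b : ℝ}

lemma le_mul_exp_integral_of_deriv_right_le_mul (hab : a ≤ b)
    (hcont : ContinuousOn f (Icc a b)) (hpos : ∀ x ∈ Icc a b, 0 < f x)
    (hderiv : ∀ x ∈ Ioo a b, HasDerivWithinAt f (f' x) (Ioi x) x)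
    (hφ : IntegrableOn φ (Icc a b)) (hle : ∀ x ∈ Ioo a b, f' x ≤ φ x * f x) :
    f b ≤ f a * Real.exp (∫ x in a..b, φ x) := by
  have hlog : Real.log (f b) - Real.log (f a) ≤ ∫ x in a..b, φ x := by
    refine intervalIntegral.sub_le_integral_of_hasDeriv_right_of_le
      (g := fun x ↦ Real.log (f x)) (g' := fun x ↦ f' x / f x) hab
      (hcont.log fun x hx ↦ (hpos x hx).ne') (fun x hx ↦ ?_) hφ (fun x hx ↦ ?_)
    · exact (hderiv x hx).log (hpos x (Ioo_subset_Icc_self hx)).ne'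
    · exact (div_le_iff₀ (hpos x (Ioo_subset_Icc_self hx))).mpr (hle x hx)
  have hfa : 0 < f a := hpos a (left_mem_Icc.mpr hab)
  have hfb : 0 < f b := hpos b (right_mem_Icc.mpr hab)
  calc f b = Real.exp (Real.log (f b)) := (Real.exp_log hfb).symm
    _ ≤ Real.exp (Real.log (f a) + ∫ x in a..b, φ x) := Real.exp_le_exp.mpr (by linarith)
    _ = f a * Real.exp (∫ x in a..b, φ x) := by rw [Real.exp_add, Real.exp_log hfa]

lemma le_mul_exp_integral_Ioi_of_deriv_right_le_mul
    (hcont : ContinuousOn f (Ici a)) (hpos : ∀ x ∈ Ici a, 0 < f x)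
    (hderiv : ∀ x ∈ Ioi a, HasDerivWithinAt f (f' x) (Ioi x) x)
    (hφ : IntegrableOn φ (Ioi a)) (hφ_nonneg : ∀ x ∈ Ioi a, 0 ≤ φ x)
    (hle : ∀ x ∈ Ioi a, f' x ≤ φ x * f x) (hab : a ≤ b) :
    f b ≤ f a * Real.exp (∫ x in Ioi a, φ x) := by
  have hφ_Icc : IntegrableOn φ (Icc a b) :=
    ((integrableOn_Ici_iff_integrableOn_Ioi).mpr hφ).mono_set Icc_subset_Ici_self
  have hint : ∫ x in a..b, φ x ≤ ∫ x in Ioi a, φ x := by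
    rw [intervalIntegral.integral_of_le hab]
    exact setIntegral_mono_set hφ (ae_restrict_of_forall_mem measurableSet_Ioi hφ_nonneg)
      Ioc_subset_Ioi_self.eventuallyLE
  calc f b ≤ f a * Real.exp (∫ x in a..b, φ x) :=
        le_mul_exp_integral_of_deriv_right_le_mul hab (hcont.mono Icc_subset_Ici_self)
          (fun x hx ↦ hpos x hx.1) (fun x hx ↦ hderiv x hx.1) hφ_Icc (fun x hx ↦ hle x hx.1)
    _ ≤ f a * Real.exp (∫ x in Ioi a, φ x) :=
        mul_le_mul_of_nonneg_left (Real.exp_le_exp.mpr hint) (hpos a self_mem_Ici).le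

end Gronwall

lemma integrableOn_Ioi_of_integrableOn_div_of_deriv_right_le {f f' g : ℝ → ℝ} {a : ℝ}
    (hcont : ContinuousOn f (Ici a)) (hpos : ∀ x ∈ Ici a, 0 < f x)
    (hderiv : ∀ x ∈ Ioi a, HasDerivWithinAt f (f' x) (Ioi x) x)
    (hg_nonneg : ∀ x ∈ Ioi a, 0 ≤ g x) (hle : ∀ x ∈ Ioi a, f' x ≤ g x)
    (hint : IntegrableOn (fun x ↦ g x / f x) (Ioi a)) :
    IntegrableOn g (Ioi a) := by
  have hpos' : ∀ x ∈ Ioi a, 0 < f x := fun x hx ↦ hpos x (Ioi_subset_Ici_self hx)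
  have hbound : ∀ x ∈ Ioi a, ‖f x‖ ≤ f a * Real.exp (∫ y in Ioi a, g y / f y) := by
    intro x hx
    rw [Real.norm_of_nonneg (hpos' x hx).le]
    refine le_mul_exp_integral_Ioi_of_deriv_right_le_mul hcont hpos hderiv hint
      (fun y hy ↦ div_nonneg (hg_nonneg y hy) (hpos' y hy).le) (fun y hy ↦ ?_) (le_of_lt hx)
    rw [div_mul_cancel₀ _ (hpos' y hy).ne']
    exact hle y hy
  have hmul : IntegrableOn (fun x ↦ f x * (g x / f x)) (Ioi a) :=
    Integrable.bdd_mul hint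
      ((hcont.mono Ioi_subset_Ici_self).aestronglyMeasurable measurableSet_Ioi)
      (ae_restrict_of_forall_mem measurableSet_Ioi hbound)
  exact hmul.congr_fun (fun x hx ↦ mul_div_cancel₀ (g x) (hpos' x hx).ne') measurableSet_Ioi

lemma sInf_image_eq_zero_of_integrableOn {α : Type*} [MeasurableSpace α] {μ : Measure α}
    {f : α → ℝ} {s : Set α} (hs : MeasurableSet s) (hμs : μ s = ⊤)
    (hf_nonneg : ∀ x ∈ s, 0 ≤ f x) (hf : IntegrableOn f s μ) :
    sInf (f '' s) = 0 := by
  have hlower : ∀ y ∈ f '' s, 0 ≤ y := forall_mem_image.mpr hf_nonneg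
  by_contra hne
  have hconst : IntegrableOn (fun _ ↦ sInf (f '' s)) s μ := by
    refine hf.mono' aestronglyMeasurable_const (ae_restrict_of_forall_mem hs fun x hx ↦ ?_)
    rw [Real.norm_of_nonneg (Real.sInf_nonneg hlower)]
    exact csInf_le ⟨0, hlower⟩ (mem_image_of_mem f hx)
  have hfinite : μ s < ⊤ :=
    ((integrableOn_const_iff).mp hconst).resolve_left (enorm_ne_zero.mpr hne)
  exact hfinite.ne hμs

lemma integrableOn_of_continuousOn_of_setLIntegral_ofReal_ne_top {α : Type*} [TopologicalSpace α]
    [MeasurableSpace α] [OpensMeasurableSpace α] {μ : Measure α} {f : α → ℝ} {s : Set α}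
    (hs : MeasurableSet s) (hcont : ContinuousOn f s)
    (hf_nonneg : ∀ x ∈ s, 0 ≤ f x) (hfin : ∫⁻ x in s, ENNReal.ofReal (f x) ∂μ ≠ ⊤) :
    IntegrableOn f s μ :=
  (lintegral_ofReal_ne_top_iff_integrable (hcont.aestronglyMeasurable hs)
    (ae_restrict_of_forall_mem hs hf_nonneg)).mp hfin

lemma le_of_sq_add_sq_div_sq_eq_one {x y z : ℝ} (hz : 0 ≤ z)
    (h : (x ^ 2 + y ^ 2) / z ^ 2 = 1) : x ≤ z := by
  have hsum : x ^ 2 + y ^ 2 = z ^ 2 := eq_of_div_eq_one h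
  exact le_of_abs_le (abs_le_of_sq_le_sq (by linarith [sq_nonneg y]) hz)

theorem nonparabolic_end_H3_approaches_boundary_general {γ₁ γ₂ γ₁' : ℝ → ℝ} {a : ℝ}
    (hcont1 : ContinuousOn γ₁ (Ici a)) (hpos1 : ∀ s ∈ Ici a, 0 < γ₁ s)
    (hd1 : ∀ s ∈ Ioi a, HasDerivWithinAt γ₁ (γ₁' s) (Ioi s) s)
    (hnonneg2 : ∀ s ∈ Ici a, 0 ≤ γ₂ s) (hspeed : ∀ s ∈ Ioi a, γ₁' s ≤ γ₂ s)
    (hint : IntegrableOn (fun s ↦ γ₂ s / γ₁ s) (Ioi a)) :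
    sInf (γ₂ '' Ici a) = 0 := by
  have hint2 : IntegrableOn γ₂ (Ioi a) :=
    integrableOn_Ioi_of_integrableOn_div_of_deriv_right_le hcont1 hpos1 hd1
      (fun s hs ↦ hnonneg2 s (Ioi_subset_Ici_self hs)) hspeed hint
  exact sInf_image_eq_zero_of_integrableOn measurableSet_Ici Real.volume_Ici hnonneg2
    ((integrableOn_Ici_iff_integrableOn_Ioi).mpr hint2)

/-- Hyperbolic case: a complete non-parabolic end of revolution in ℍ³
(`∫₀^∞ γ₂/γ₁ < ∞`) approaches the plane `{x₃ = 0}`: `inf_{s ≥ 0} γ₂(s) = 0`. -/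
theorem nonparabolic_end_H3_approaches_boundary
    (γ₁ γ₂ γ₁' γ₂' : ℝ → ℝ)
    (hpos1 : ∀ s ∈ Ici (0:ℝ), 0 < γ₁ s)
    (hpos2 : ∀ s ∈ Ici (0:ℝ), 0 < γ₂ s)
    (hd1 : ∀ s ∈ Ici (0:ℝ), HasDerivAt γ₁ (γ₁' s) s)
    (hd2 : ∀ s ∈ Ici (0:ℝ), HasDerivAt γ₂ (γ₂' s) s)
    (hc1 : ContinuousOn γ₁' (Ici (0:ℝ)))
    (hc2 : ContinuousOn γ₂' (Ici (0:ℝ)))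
    (harc : ∀ s ∈ Ici (0:ℝ), ((γ₁' s) ^ 2 + (γ₂' s) ^ 2) / (γ₂ s) ^ 2 = 1)
    (hfin : ∫⁻ s in Ioi (0:ℝ), ENNReal.ofReal (γ₂ s / γ₁ s) ≠ ⊤) :
    sInf (γ₂ '' Ici (0:ℝ)) = 0 := by
  have hcont : ContinuousOn (fun s ↦ γ₂ s / γ₁ s) (Ioi 0) := fun s (hs : 0 < s) ↦
    ((hd2 s hs.le).continuousAt.div (hd1 s hs.le).continuousAt
      (hpos1 s hs.le).ne').continuousWithinAt
  have hint : IntegrableOn (fun s ↦ γ₂ s / γ₁ s) (Ioi 0) :=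
    integrableOn_of_continuousOn_of_setLIntegral_ofReal_ne_top measurableSet_Ioi hcont
      (fun s (hs : 0 < s) ↦ div_nonneg (hpos2 s hs.le).le (hpos1 s hs.le).le) hfin
  exact nonparabolic_end_H3_approaches_boundary_general (HasDerivAt.continuousOn hd1) hpos1
    (fun s (hs : 0 < s) ↦ (hd1 s hs.le).hasDerivWithinAt) (fun s hs ↦ (hpos2 s hs).le)
    (fun s (hs : 0 < s) ↦ le_of_sq_add_sq_div_sq_eq_one (hpos2 s hs.le).le (harc s hs.le)) hint
end

section
/- Let γ₁, γ₂ : [0,∞) → ℝ be C¹ functions with γ₁(s) > 0 and γ₂(s) > 0 for all s ≥ 0, satisfying the hyperbolic arc-length condition (γ₁'(s)² + γ₂'(s)²)/γ₂(s)² = 1 for all s ≥ 0. If ∫₀^∞ γ₂(s)/γ₁(s) ds < +∞ (the end is non-parabolic), then sup_{s ≥ 0} γ₁(s) < +∞; in fact γ₁(s) ≤ γ₁(0)·exp(∫₀^∞ γ₂(t)/γ₁(t) dt) for all s ≥ 0. -/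
open MeasureTheory Set

/-!
A curve parametrized by hyperbolic arc length has `|γ₁'| ≤ γ₂`, so the logarithmic derivative of
`γ₁` is at most `γ₂ / γ₁`. Integrating bounds the growth of `log γ₁` by the integral of `γ₂ / γ₁`.
-/

section Gronwall

variable {u u' κ : ℝ → ℝ} {a : ℝ}

theorem le_mul_exp_integral_of_hasDeriv_right_le {b : ℝ} (hab : a ≤ b)
    (hpos : ∀ x ∈ Icc a b, 0 < u x) (hcont : ContinuousOn u (Icc a b))
    (hderiv : ∀ x ∈ Ioo a b, HasDerivWithinAt u (u' x) (Ioi x) x)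
    (hκ : IntegrableOn κ (Icc a b)) (hle : ∀ x ∈ Ioo a b, u' x ≤ κ x * u x) :
    u b ≤ u a * Real.exp (∫ x in a..b, κ x) := by
  have hua : 0 < u a := hpos a (left_mem_Icc.2 hab)
  have hub : 0 < u b := hpos b (right_mem_Icc.2 hab)
  have hlog : Real.log (u b) - Real.log (u a) ≤ ∫ x in a..b, κ x :=
    intervalIntegral.sub_le_integral_of_hasDeriv_right_of_le hab
      (hcont.log fun x hx => (hpos x hx).ne')
      (fun x hx => (hderiv x hx).log (hpos x (Ioo_subset_Icc_self hx)).ne')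
      hκ fun x hx => (div_le_iff₀ (hpos x (Ioo_subset_Icc_self hx))).2 (hle x hx)
  calc
    u b = u a * Real.exp (Real.log (u b) - Real.log (u a)) := by
      rw [Real.exp_sub, Real.exp_log hub, Real.exp_log hua, mul_div_cancel₀ _ hua.ne']
    _ ≤ u a * Real.exp (∫ x in a..b, κ x) := by gcongr

theorem le_mul_exp_integral_Ioi_of_hasDeriv_right_le
    (hpos : ∀ x ∈ Ici a, 0 < u x) (hcont : ContinuousOn u (Ici a))
    (hderiv : ∀ x ∈ Ioi a, HasDerivWithinAt u (u' x) (Ioi x) x)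
    (hκ : IntegrableOn κ (Ioi a)) (hκ_nonneg : ∀ x ∈ Ioi a, 0 ≤ κ x)
    (hle : ∀ x ∈ Ioi a, u' x ≤ κ x * u x) {b : ℝ} (hab : a ≤ b) :
    u b ≤ u a * Real.exp (∫ x in Ioi a, κ x) := by
  have hua : 0 < u a := hpos a self_mem_Ici
  have hint : ∫ x in a..b, κ x ≤ ∫ x in Ioi a, κ x := by
    rw [intervalIntegral.integral_of_le hab]
    exact setIntegral_mono_set hκ (ae_restrict_of_forall_mem measurableSet_Ioi hκ_nonneg)
      Ioc_subset_Ioi_self.eventuallyLE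
  calc
    u b ≤ u a * Real.exp (∫ x in a..b, κ x) :=
      le_mul_exp_integral_of_hasDeriv_right_le hab (fun x hx => hpos x hx.1)
        (hcont.mono Icc_subset_Ici_self) (fun x hx => hderiv x hx.1)
        (((integrableOn_Ici_iff_integrableOn_Ioi).2 hκ).mono_set Icc_subset_Ici_self)
        fun x hx => hle x hx.1
    _ ≤ u a * Real.exp (∫ x in Ioi a, κ x) := by gcongr

end Gronwall

theorem abs_le_of_sq_add_sq_div_sq_eq_one {x y r : ℝ} (hr : 0 ≤ r)
    (h : (x ^ 2 + y ^ 2) / r ^ 2 = 1) : |x| ≤ r :=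
  abs_le_of_sq_le_sq ((le_add_of_nonneg_right (sq_nonneg y)).trans_eq (eq_of_div_eq_one h)) hr

theorem nonparabolic_end_H3_bounded_first_coordinate_general {γ₁ γ₂ γ₁' : ℝ → ℝ}
    (hpos : ∀ s ∈ Ici (0 : ℝ), 0 < γ₁ s)
    (hnonneg : ∀ s ∈ Ioi (0 : ℝ), 0 ≤ γ₂ s)
    (hderiv : ∀ s ∈ Ici (0 : ℝ), HasDerivWithinAt γ₁ (γ₁' s) (Ici 0) s)
    (hspeed : ∀ s ∈ Ioi (0 : ℝ), γ₁' s ≤ γ₂ s)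
    (hfin : IntegrableOn (fun t => γ₂ t / γ₁ t) (Ioi (0 : ℝ))) :
    BddAbove (γ₁ '' Ici (0 : ℝ)) ∧
      ∀ s ∈ Ici (0 : ℝ),
        γ₁ s ≤ γ₁ 0 * Real.exp (∫ t in Ioi (0 : ℝ), γ₂ t / γ₁ t) := by
  have hpos_Ioi : ∀ s ∈ Ioi (0 : ℝ), 0 < γ₁ s := fun s hs => hpos s (Ioi_subset_Ici_self hs)
  have hbound : ∀ s ∈ Ici (0 : ℝ),
      γ₁ s ≤ γ₁ 0 * Real.exp (∫ t in Ioi (0 : ℝ), γ₂ t / γ₁ t) := fun s hs =>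
    le_mul_exp_integral_Ioi_of_hasDeriv_right_le hpos
      (fun t ht => (hderiv t ht).continuousWithinAt)
      (fun t ht => (hderiv t (Ioi_subset_Ici_self ht)).mono (Ioi_subset_Ici (le_of_lt ht)))
      hfin
      (fun t ht => div_nonneg (hnonneg t ht) (hpos_Ioi t ht).le)
      (fun t ht => (hspeed t ht).trans_eq (div_mul_cancel₀ _ (hpos_Ioi t ht).ne').symm)
      hs
  exact ⟨⟨_, forall_mem_image.2 hbound⟩, hbound⟩

/-- Hyperbolic case: for a non-parabolic end of revolution in ℍ³
(`∫₀^∞ γ₂/γ₁ < ∞`), the first coordinate of the profile curve is bounded: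
`γ₁(s) ≤ γ₁(0)·exp(∫₀^∞ γ₂/γ₁)` for all `s ≥ 0`. -/
theorem nonparabolic_end_H3_bounded_first_coordinate
    (γ₁ γ₂ γ₁' γ₂' : ℝ → ℝ)
    (hpos1 : ∀ s ∈ Ici (0:ℝ), 0 < γ₁ s)
    (hpos2 : ∀ s ∈ Ici (0:ℝ), 0 < γ₂ s)
    (hd1 : ∀ s ∈ Ici (0:ℝ), HasDerivAt γ₁ (γ₁' s) s)
    (hd2 : ∀ s ∈ Ici (0:ℝ), HasDerivAt γ₂ (γ₂' s) s)
    (hc1 : ContinuousOn γ₁' (Ici (0:ℝ)))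
    (hc2 : ContinuousOn γ₂' (Ici (0:ℝ)))
    (harc : ∀ s ∈ Ici (0:ℝ), ((γ₁' s) ^ 2 + (γ₂' s) ^ 2) / (γ₂ s) ^ 2 = 1)
    (hfin : IntegrableOn (fun t => γ₂ t / γ₁ t) (Ioi (0:ℝ)) volume) :
    BddAbove (γ₁ '' Ici (0:ℝ)) ∧
      ∀ s ∈ Ici (0:ℝ),
        γ₁ s ≤ γ₁ 0 * Real.exp (∫ t in Ioi (0:ℝ), γ₂ t / γ₁ t) := by
  have hspeed : ∀ s ∈ Ioi (0:ℝ), γ₁' s ≤ γ₂ s := fun s hs =>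
    le_of_abs_le (abs_le_of_sq_add_sq_div_sq_eq_one (hpos2 s hs.out.le).le (harc s hs.out.le))
  exact nonparabolic_end_H3_bounded_first_coordinate_general hpos1
    (fun s hs => (hpos2 s hs.out.le).le) (fun s hs => (hd1 s hs).hasDerivWithinAt) hspeed hfin
end

section
/- Let ρ > 0 and let w : [0,∞) → ℝ be a C^∞ function with w(x) > 0 for all x ≥ 0. Then there exists a C^∞ function W : [0,∞) → ℝ such that: W(x) = w(x − ρ) for all x ≥ ρ; W(0) = 0; W'(0) = 1; all even-order derivatives of W at 0 vanish (W^{(2k)}(0) = 0 for all k ≥ 1); and W(x) > 0 for all x > 0. -/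
open MeasureTheory Set

/-!
The only difficulty is at `x = ρ`, where the prescribed values `w (x - ρ)` are smooth from the right
only. Borel's lemma gives a smooth function on the line with the same Taylor series at `0` as `w`;
its difference to `w` is flat at `0`, hence extends smoothly by zero, so `w` has a smooth extension
`f` to the line, which is positive slightly to the left of `0` as well. A smooth cutoff just
before `ρ` then interpolates between `x` and `f (x - ρ)`: near `0` the result is the identity, and
elsewhere it is a convex combination of positive values.
-/

open Filter
open scoped ContDiff Topology

section Borel

open scoped Nat

theorem iteratedDeriv_tsum_apply {ι 𝕜 F : Type*} [NontriviallyNormedField 𝕜]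
    [IsRCLikeNormedField 𝕜] [NormedAddCommGroup F] [NormedSpace 𝕜 F] [CompleteSpace F] {N : ℕ∞}
    {f : ι → 𝕜 → F} {v : ℕ → ι → ℝ} (hf : ∀ i, ContDiff 𝕜 N (f i))
    (hv : ∀ k : ℕ, (k : ℕ∞) ≤ N → Summable (v k))
    (hfv : ∀ (k : ℕ) (i : ι) (x : 𝕜), (k : ℕ∞) ≤ N → ‖iteratedFDeriv 𝕜 k (f i) x‖ ≤ v k i)
    {k : ℕ} (hk : (k : ℕ∞) ≤ N) (x : 𝕜) :
    iteratedDeriv k (fun y ↦ ∑' i, f i y) x = ∑' i, iteratedDeriv k (f i) x := by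
  have hsum : Summable fun i ↦ iteratedFDeriv 𝕜 k (f i) x :=
    .of_norm_bounded (hv k hk) fun i ↦ hfv k i x hk
  simp only [iteratedDeriv, iteratedFDeriv_tsum_apply hf hv hfv hk]
  exact (ContinuousMultilinearMap.hasSum_eval hsum.hasSum _).tsum_eq.symm

variable {E : Type*} [NormedAddCommGroup E] [NormedSpace ℝ E]

theorem exists_forall_norm_iteratedDeriv_le_of_hasCompactSupport {f : ℝ → E} {k : ℕ}
    (hf : ContDiff ℝ k f) (hfs : HasCompactSupport f) : ∃ C, ∀ x, ‖iteratedDeriv k f x‖ ≤ C := by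
  simp only [← norm_iteratedFDeriv_eq_norm_iteratedDeriv]
  exact (hfs.iteratedFDeriv k).exists_bound_of_continuous (hf.continuous_iteratedFDeriv le_rfl)

theorem iteratedDeriv_const_smul_comp_const_mul {f : ℝ → E} {k : ℕ} (hf : ContDiff ℝ k f)
    (c t x : ℝ) :
    iteratedDeriv k (fun y ↦ c • f (t * y)) x = (c * t ^ k) • iteratedDeriv k f (t * x) := by
  rw [iteratedDeriv_fun_const_smul_field, iteratedDeriv_comp_const_smul hf, mul_smul]

/- The factor `(t ^ n)⁻¹` preserves the `n`-th derivative at `0`, and each derivative of lower order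
`k` gains a factor `t ^ k / t ^ n`. -/
theorem eventually_forall_norm_iteratedDeriv_rescale_le {f : ℝ → E} {n : ℕ}
    (hf : ContDiff ℝ n f) (hfs : HasCompactSupport f) {ε : ℝ} (hε : 0 < ε) :
    ∀ᶠ t : ℝ in atTop, ∀ k < n, ∀ x,
      ‖iteratedDeriv k (fun y ↦ (t ^ n)⁻¹ • f (t * y)) x‖ ≤ ε := by
  suffices ∀ k ∈ Finset.range n, ∀ᶠ t : ℝ in atTop, ∀ x,
      ‖iteratedDeriv k (fun y ↦ (t ^ n)⁻¹ • f (t * y)) x‖ ≤ ε by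
    simpa only [Finset.mem_range] using (eventually_all_finset (Finset.range n)).2 this
  intro k hk
  have hkn : k < n := Finset.mem_range.1 hk
  have hfk : ContDiff ℝ k f := hf.of_le (mod_cast hkn.le)
  obtain ⟨C, hC⟩ := exists_forall_norm_iteratedDeriv_le_of_hasCompactSupport hfk hfs
  have hlim : Tendsto (fun t : ℝ ↦ t ^ k / t ^ n * C) atTop (𝓝 0) := by
    simpa only [zero_mul] using (tendsto_pow_div_pow_atTop_zero hkn).mul_const C
  filter_upwards [hlim.eventually_le_const hε, eventually_gt_atTop 0] with t ht ht0 x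
  calc ‖iteratedDeriv k (fun y ↦ (t ^ n)⁻¹ • f (t * y)) x‖
      = t ^ k / t ^ n * ‖iteratedDeriv k f (t * x)‖ := by
        rw [iteratedDeriv_const_smul_comp_const_mul hfk, norm_smul,
          Real.norm_of_nonneg (by positivity), inv_mul_eq_div]
    _ ≤ t ^ k / t ^ n * C := by gcongr; exact hC _
    _ ≤ ε := ht

theorem exists_contDiff_hasCompactSupport_iteratedDeriv_eq_single (n : ℕ) (c : E) :
    ∃ f : ℝ → E, ContDiff ℝ ∞ f ∧ HasCompactSupport f ∧
      ∀ k, iteratedDeriv k f 0 = (Pi.single n c : ℕ → E) k := by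
  let χ : ContDiffBump (0 : ℝ) := ⟨1, 2, by norm_num, by norm_num⟩
  have hpow : ContDiff ℝ ∞ fun x : ℝ ↦ x ^ n := contDiff_id.pow n
  refine ⟨fun x ↦ χ x • x ^ n • (n ! : ℝ)⁻¹ • c, χ.contDiff.smul (hpow.smul contDiff_const),
    χ.hasCompactSupport.smul_right, fun k ↦ ?_⟩
  have hgerm : (fun x ↦ χ x • x ^ n • (n ! : ℝ)⁻¹ • c) =ᶠ[𝓝 0] fun x ↦ x ^ n • (n ! : ℝ)⁻¹ • c := by
    filter_upwards [χ.eventuallyEq_one] with x hx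
    rw [hx, Pi.one_apply, one_smul]
  rw [hgerm.iteratedDeriv_eq,
    iteratedDeriv_smul_const (hpow.contDiffAt.of_le (mod_cast le_top)), iteratedDeriv_fun_pow_zero]
  obtain rfl | hkn := eq_or_ne k n
  · rw [if_pos rfl, Pi.single_eq_same, smul_inv_smul₀ (mod_cast k.factorial_ne_zero)]
  · rw [if_neg hkn, Pi.single_eq_of_ne hkn, Nat.cast_zero, zero_smul]

theorem exists_contDiff_iteratedDeriv_eq_single_of_norm_le (n : ℕ) (c : E) {ε : ℝ} (hε : 0 < ε) :
    ∃ f : ℝ → E, ContDiff ℝ ∞ f ∧ HasCompactSupport f ∧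
      (∀ k, iteratedDeriv k f 0 = (Pi.single n c : ℕ → E) k) ∧
      ∀ k < n, ∀ x, ‖iteratedDeriv k f x‖ ≤ ε := by
  obtain ⟨f, hf, hfs, hf0⟩ := exists_contDiff_hasCompactSupport_iteratedDeriv_eq_single n c
  have hfk (k : ℕ) : ContDiff ℝ k f := hf.of_le (mod_cast le_top)
  obtain ⟨t, hsmall, ht⟩ := ((eventually_forall_norm_iteratedDeriv_rescale_le (hfk n) hfs hε).and
    (eventually_ne_atTop 0)).exists
  refine ⟨fun y ↦ (t ^ n)⁻¹ • f (t * y), (hf.comp (contDiff_const.mul contDiff_id)).const_smul _,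
    (hfs.comp_smul ht).smul_left, fun k ↦ ?_, hsmall⟩
  rw [iteratedDeriv_const_smul_comp_const_mul (hfk k), mul_zero, hf0]
  obtain rfl | hkn := eq_or_ne k n
  · rw [inv_mul_cancel₀ (pow_ne_zero k ht), one_smul]
  · rw [Pi.single_eq_of_ne hkn, smul_zero]

/-- **Borel's lemma** on the real line. -/
theorem exists_contDiff_iteratedDeriv_eq [CompleteSpace E] (x₀ : ℝ) (c : ℕ → E) :
    ∃ f : ℝ → E, ContDiff ℝ ∞ f ∧ ∀ k, iteratedDeriv k f x₀ = c k := by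
  choose F hF hFs hF0 hFsmall using fun n ↦
    exists_contDiff_iteratedDeriv_eq_single_of_norm_le n (c n) (ε := (1 / 2) ^ n) (by positivity)
  have hbound (k n : ℕ) : ∃ C, (∀ x, ‖iteratedFDeriv ℝ k (F n) x‖ ≤ C) ∧
      (k < n → C ≤ (1 / 2) ^ n) := by
    simp only [norm_iteratedFDeriv_eq_norm_iteratedDeriv]
    by_cases hkn : k < n
    · exact ⟨_, hFsmall n k hkn, fun _ ↦ le_rfl⟩
    · obtain ⟨C, hC⟩ := exists_forall_norm_iteratedDeriv_le_of_hasCompactSupport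
        ((hF n).of_le (mod_cast le_top : (k : ℕ∞ω) ≤ ∞)) (hFs n)
      exact ⟨C, hC, fun h ↦ absurd h hkn⟩
  choose v hFv hv using hbound
  have hsum (k : ℕ) : Summable (v k) := by
    refine .of_norm_bounded_eventually_nat summable_geometric_two ?_
    filter_upwards [eventually_gt_atTop k] with n hkn
    rw [Real.norm_of_nonneg ((norm_nonneg _).trans (hFv k n 0))]
    exact hv k n hkn
  refine ⟨fun x ↦ ∑' n, F n (x - x₀), ?_, fun k ↦ ?_⟩
  · exact (contDiff_tsum hF (fun k _ ↦ hsum k) fun k n x _ ↦ hFv k n x).comp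
      (contDiff_id.sub contDiff_const)
  · rw [congrFun (iteratedDeriv_comp_sub_const k (fun x ↦ ∑' n, F n x) x₀) x₀, sub_self,
      iteratedDeriv_tsum_apply hF (fun k _ ↦ hsum k) (fun k n x _ ↦ hFv k n x) le_top]
    simp only [hF0]
    exact (tsum_eq_single k fun n hn ↦ Pi.single_eq_of_ne hn.symm _).trans (Pi.single_eq_same k _)

end Borel

section HalfLine

variable {E : Type*} [NormedAddCommGroup E] [NormedSpace ℝ E] {a : ℝ}

theorem hasDerivAt_indicator_Ici {g : ℝ → E} (hg : DifferentiableOn ℝ g (Ici a)) (hga : g a = 0)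
    (hga' : derivWithin g (Ici a) a = 0) (x : ℝ) :
    HasDerivAt ((Ici a).indicator g) ((Ici a).indicator (derivWithin g (Ici a)) x) x := by
  obtain hx | rfl | hx := lt_trichotomy x a
  · rw [indicator_of_notMem (by simpa using hx)]
    refine (hasDerivAt_const x (0 : E)).congr_of_eventuallyEq ?_
    filter_upwards [Iio_mem_nhds hx] with y hy using indicator_of_notMem (by simpa using hy) g
  · have hright : HasDerivWithinAt ((Ici x).indicator g) 0 (Ici x) x :=
      (hga' ▸ (hg x self_mem_Ici).hasDerivWithinAt).congr_of_mem
        (fun y hy ↦ indicator_of_mem hy g) self_mem_Ici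
    have hleft : HasDerivWithinAt ((Ici x).indicator g) 0 (Iic x) x := by
      refine (hasDerivWithinAt_const x (Iic x) (0 : E)).congr_of_mem (fun y hy ↦ ?_) self_mem_Iic
      obtain rfl | hyx := (mem_Iic.1 hy).eq_or_lt
      · rw [indicator_of_mem self_mem_Ici, hga]
      · exact indicator_of_notMem (by simpa using hyx) g
    rw [indicator_of_mem self_mem_Ici, hga', ← hasDerivWithinAt_univ, ← Ici_union_Iic]
    exact hright.union hleft
  · rw [indicator_of_mem (mem_Ici.2 hx.le)]
    refine ((hg x hx.le).hasDerivWithinAt.hasDerivAt (Ici_mem_nhds hx)).congr_of_eventuallyEq ?_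
    filter_upwards [Ici_mem_nhds hx] with y hy using indicator_of_mem hy g

theorem contDiff_indicator_Ici {n : ℕ} {g : ℝ → E} (hg : ContDiffOn ℝ n g (Ici a))
    (hga : ∀ k ≤ n, iteratedDerivWithin k g (Ici a) a = 0) :
    ContDiff ℝ n ((Ici a).indicator g) := by
  induction n generalizing g with
  | zero =>
    have hga₀ : g a = 0 := by simpa using hga 0 le_rfl
    refine contDiff_zero.2 (continuous_indicator (by simpa using hga₀) ?_)
    simpa using hg.continuousOn
  | succ n ih =>
    push_cast at hg ⊢
    obtain ⟨hdiff, -, hderiv⟩ := (contDiffOn_succ_iff_derivWithin (uniqueDiffOn_Ici a)).1 hg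
    have hindicator := hasDerivAt_indicator_Ici hdiff (by simpa using hga 0 n.succ.zero_le)
      (by simpa using hga 1 (by lia))
    refine contDiff_succ_iff_deriv.2 ⟨fun x ↦ (hindicator x).differentiableAt, by simp, ?_⟩
    rw [funext fun x ↦ (hindicator x).deriv]
    refine ih hderiv fun k hk ↦ ?_
    rw [← iteratedDerivWithin_succ']
    exact hga (k + 1) (by lia)

theorem exists_contDiff_eqOn_Ici [CompleteSpace E] {w : ℝ → E} (hw : ContDiffOn ℝ ∞ w (Ici a)) :
    ∃ f : ℝ → E, ContDiff ℝ ∞ f ∧ EqOn f w (Ici a) := by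
  obtain ⟨f, hf, hfw⟩ := exists_contDiff_iteratedDeriv_eq a
    fun k ↦ iteratedDerivWithin k w (Ici a) a
  have hflat (k : ℕ) : iteratedDerivWithin k (w - f) (Ici a) a = 0 := by
    have hk : (k : ℕ∞ω) ≤ ∞ := mod_cast le_top
    have hfk : ContDiffAt ℝ k f a := hf.contDiffAt.of_le hk
    rw [iteratedDerivWithin_sub self_mem_Ici (uniqueDiffOn_Ici a)
        ((hw a self_mem_Ici).of_le hk) hfk.contDiffWithinAt,
      iteratedDerivWithin_eq_iteratedDeriv (uniqueDiffOn_Ici a) hfk self_mem_Ici, hfw, sub_self]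
  have hdiff : ContDiff ℝ ∞ ((Ici a).indicator (w - f)) := contDiff_infty.2 fun n ↦
    contDiff_indicator_Ici ((hw.sub hf.contDiffOn).of_le (mod_cast le_top)) fun k _ ↦ hflat k
  refine ⟨f + (Ici a).indicator (w - f), hf.add hdiff, fun x hx ↦ ?_⟩
  rw [Pi.add_apply, indicator_of_mem hx, Pi.sub_apply, add_sub_cancel]

theorem exists_contDiff_eqOn_Ici_forall_pos {w : ℝ → ℝ} (hw : ContDiffOn ℝ ∞ w (Ici a))
    (hwpos : ∀ x ∈ Ici a, 0 < w x) :
    ∃ f : ℝ → ℝ, ContDiff ℝ ∞ f ∧ EqOn f w (Ici a) ∧ ∃ b < a, ∀ x ∈ Ioi b, 0 < f x := by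
  obtain ⟨f, hf, hfw⟩ := exists_contDiff_eqOn_Ici hw
  have hfa : 0 < f a := by simpa only [hfw self_mem_Ici] using hwpos a self_mem_Ici
  obtain ⟨b, hba, hb⟩ := exists_Ioc_subset_of_mem_nhds
    (hf.continuous.continuousAt.eventually_const_lt hfa) (exists_lt a)
  refine ⟨f, hf, hfw, b, hba, fun x hx ↦ ?_⟩
  obtain hxa | hax := le_total x a
  · exact hb ⟨hx, hxa⟩
  · exact hfw hax ▸ hwpos x hax

theorem exists_contDiff_eqOn_Iic_eqOn_Ici {n : ℕ∞} {f g : ℝ → E} {b : ℝ} (hab : a < b)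
    (hf : ContDiff ℝ n f) (hg : ContDiff ℝ n g) :
    ∃ h : ℝ → E, ContDiff ℝ n h ∧ EqOn h f (Iic a) ∧ EqOn h g (Ici b) ∧
      ∀ x, h x ∈ segment ℝ (f x) (g x) := by
  let φ (x : ℝ) : ℝ := Real.smoothTransition ((x - a) / (b - a))
  have hφ : ContDiff ℝ n φ :=
    Real.smoothTransition.contDiff.comp ((contDiff_id.sub contDiff_const).div_const _)
  have hba : 0 < b - a := sub_pos.2 hab
  refine ⟨fun x ↦ (1 - φ x) • f x + φ x • g x,
    ((contDiff_const.sub hφ).smul hf).add (hφ.smul hg), fun x hx ↦ ?_, fun x hx ↦ ?_, fun x ↦ ?_⟩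
  · have hφx : φ x = 0 := Real.smoothTransition.zero_of_nonpos
      (div_nonpos_of_nonpos_of_nonneg (sub_nonpos.2 hx) hba.le)
    simp [hφx]
  · have hφx : φ x = 1 := Real.smoothTransition.one_of_one_le
      ((one_le_div hba).2 (sub_le_sub_right hx a))
    simp [hφx]
  · exact ⟨1 - φ x, φ x, sub_nonneg.2 (Real.smoothTransition.le_one _),
      Real.smoothTransition.nonneg _, sub_add_cancel 1 _, rfl⟩

end HalfLine

/-- Extension lemma: any smooth positive warping function `w` on `[0,∞)` extends,
after a shift by `ρ > 0`, to a smooth warping function `W` on `[0,∞)` with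
`W(0) = 0`, `W'(0) = 1`, vanishing even derivatives at `0`, and `W > 0` on `(0,∞)`. -/
theorem warping_function_extension
    (ρ : ℝ) (hρ : 0 < ρ) (w : ℝ → ℝ)
    (hw : ContDiffOn ℝ (⊤ : ℕ∞) w (Ici (0:ℝ)))
    (hwpos : ∀ x ∈ Ici (0:ℝ), 0 < w x) :
    ∃ W : ℝ → ℝ,
      ContDiffOn ℝ (⊤ : ℕ∞) W (Ici (0:ℝ)) ∧
      (∀ x, ρ ≤ x → W x = w (x - ρ)) ∧
      W 0 = 0 ∧
      iteratedDerivWithin 1 W (Ici (0:ℝ)) 0 = 1 ∧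
      (∀ k : ℕ, 1 ≤ k → iteratedDerivWithin (2 * k) W (Ici (0:ℝ)) 0 = 0) ∧
      (∀ x : ℝ, 0 < x → 0 < W x) := by
  obtain ⟨f, hf, hfw, b, hb, hfpos⟩ := exists_contDiff_eqOn_Ici_forall_pos hw hwpos
  obtain ⟨a, ha, haρ⟩ := exists_between (max_lt hρ (by linarith : b + ρ < ρ))
  obtain ⟨ha0, hba⟩ := max_lt_iff.1 ha
  obtain ⟨W, hW, hWid, hWf, hWseg⟩ := exists_contDiff_eqOn_Iic_eqOn_Ici haρ contDiff_id
    (hf.comp (contDiff_id.sub contDiff_const) : ContDiff ℝ ∞ fun x ↦ f (x - ρ))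
  have hgerm : W =ᶠ[𝓝[Ici 0] 0] id :=
    eventually_nhdsWithin_of_eventually_nhds (hWid.eventuallyEq_of_mem (Iic_mem_nhds ha0))
  have hderiv (n : ℕ) : iteratedDerivWithin n W (Ici 0) 0 = if n = 1 then 1 else 0 := by
    rw [hgerm.iteratedDerivWithin_eq (hWid ha0.le),
      iteratedDerivWithin_id self_mem_Ici (uniqueDiffOn_Ici 0)]
    split_ifs <;> simp_all
  refine ⟨W, hW.contDiffOn, fun x hx ↦ ?_, hWid ha0.le, (hderiv 1).trans (if_pos rfl),
    fun k _ ↦ ?_, fun x hx ↦ ?_⟩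
  · exact (hWf hx).trans (hfw (sub_nonneg.2 hx))
  · rw [hderiv, if_neg (by lia)]
  · obtain hxa | hax := le_total x a
    · exact hWid hxa ▸ hx
    · have hfx : 0 < f (x - ρ) := hfpos _ (mem_Ioi.2 (by linarith))
      exact (convex_Ioi 0).segment_subset hx hfx (hWseg x)
end

section
/- Let w : [0,∞) → ℝ be a continuous function with w(t) > 0 for all t > 0, and define the centroid function x_g(s) = (1/s)·∫₀^s w(t) dt for s > 0. Suppose there exist constants C > 0 and s₀ > 0 such that x_g(s) ≤ C·s for all s ≥ s₀. Then ∫_{s₀}^∞ t/(∫₀^t w(r) dr) dt = +∞. Consequently an end of revolution in ℍ³ whose warping function w = γ₁/γ₂ has centroid growing at most linearly is parabolic. -/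
open MeasureTheory Set

/-!
Since `∫₀ᵗ w` is `t` times the centroid, linear growth of the centroid means `∫₀ᵗ w ≤ C t²`.
Hence `t / ∫₀ᵗ w ≥ C⁻¹ t⁻¹` for large `t`, and `t⁻¹` is not integrable at infinity.
-/

open Filter

theorem lintegral_Ioi_ofReal_const_mul_inv_eq_top {a c : ℝ} (ha : 0 ≤ a) (hc : 0 < c) :
    ∫⁻ t in Ioi a, ENNReal.ofReal (c * t⁻¹) = ⊤ := by
  have not_integrable : ¬ IntegrableOn (fun t : ℝ ↦ c * t⁻¹) (Ioi a) := by
    rw [IntegrableOn, integrable_const_mul_iff hc.ne'.isUnit]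
    exact not_integrableOn_Ioi_inv
  have nonneg : 0 ≤ᵐ[volume.restrict (Ioi a)] fun t : ℝ ↦ c * t⁻¹ := by
    filter_upwards [ae_restrict_mem measurableSet_Ioi] with t ht
    exact mul_nonneg hc.le (inv_nonneg.mpr (ha.trans ht.le))
  by_contra ne_top
  exact not_integrable ((lintegral_ofReal_ne_top_iff_integrable (by fun_prop) nonneg).mp ne_top)

theorem lintegral_Ioi_ofReal_eq_top_of_eventually_const_mul_inv_le {f : ℝ → ℝ} {c : ℝ}
    (hc : 0 < c) (hf : ∀ᶠ t in atTop, c * t⁻¹ ≤ f t) (a : ℝ) :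
    ∫⁻ t in Ioi a, ENNReal.ofReal (f t) = ⊤ := by
  obtain ⟨b, hb⟩ := eventually_atTop.mp
    (hf.and ((eventually_ge_atTop a).and (eventually_ge_atTop 0)))
  obtain ⟨-, hab, hb0⟩ := hb b le_rfl
  refine top_unique ?_
  calc ⊤ = ∫⁻ t in Ioi b, ENNReal.ofReal (c * t⁻¹) :=
        (lintegral_Ioi_ofReal_const_mul_inv_eq_top hb0 hc).symm
    _ ≤ ∫⁻ t in Ioi b, ENNReal.ofReal (f t) :=
        setLIntegral_mono' measurableSet_Ioi fun t ht ↦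
          ENNReal.ofReal_le_ofReal (hb t (le_of_lt ht)).1
    _ ≤ ∫⁻ t in Ioi a, ENNReal.ofReal (f t) := lintegral_mono_set (Ioi_subset_Ioi hab)

theorem lintegral_Ioi_ofReal_div_eq_top_of_eventually_le_sq {W : ℝ → ℝ} {C : ℝ}
    (hpos : ∀ᶠ t in atTop, 0 < W t) (hle : ∀ᶠ t in atTop, W t ≤ C * t ^ 2) (a : ℝ) :
    ∫⁻ t in Ioi a, ENNReal.ofReal (t / W t) = ⊤ := by
  obtain ⟨u, hu_pos, hu_le⟩ := (hpos.and hle).exists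
  have hC : 0 < C := pos_of_mul_pos_left (hu_pos.trans_le hu_le) (sq_nonneg u)
  refine lintegral_Ioi_ofReal_eq_top_of_eventually_const_mul_inv_le (inv_pos.mpr hC) ?_ a
  filter_upwards [hpos, hle, eventually_gt_atTop 0] with t hWt hWt_le ht
  calc C⁻¹ * t⁻¹ = t / (C * t ^ 2) := by field_simp
    _ ≤ t / W t := div_le_div_of_nonneg_left ht.le hWt hWt_le

-- `hpos` includes interval integrability of `w`: otherwise the integral would have junk value `0`.
theorem centroid_linear_growth_parabolic_general {w : ℝ → ℝ} {C : ℝ}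
    (hpos : ∀ᶠ t in atTop, 0 < ∫ r in (0 : ℝ)..t, w r)
    (hcent : ∀ᶠ s in atTop, (1 / s) * ∫ t in (0 : ℝ)..s, w t ≤ C * s) (a : ℝ) :
    ∫⁻ t in Ioi a, ENNReal.ofReal (t / ∫ r in (0 : ℝ)..t, w r) = ⊤ := by
  refine lintegral_Ioi_ofReal_div_eq_top_of_eventually_le_sq (C := C) hpos ?_ a
  filter_upwards [hcent, eventually_gt_atTop 0] with s hs hs_pos
  rw [one_div, inv_mul_le_iff₀ hs_pos] at hs
  linarith

/-- If the centroid `x_g(s) = (1/s)∫₀^s w` of the warping function grows at most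
linearly (`x_g(s) ≤ C·s` for `s ≥ s₀`), then `∫_{s₀}^∞ t/(∫₀^t w) dt = ∞`,
so the corresponding end of revolution in ℍ³ is parabolic. -/
theorem centroid_linear_growth_parabolic
    (w : ℝ → ℝ)
    (hw : ContinuousOn w (Ici (0:ℝ)))
    (hpos : ∀ t : ℝ, 0 < t → 0 < w t)
    (C s₀ : ℝ) (hC : 0 < C) (hs₀ : 0 < s₀)
    (hcent : ∀ s : ℝ, s₀ ≤ s → (1 / s) * ∫ t in (0:ℝ)..s, w t ≤ C * s) :
    ∫⁻ t in Ioi s₀, ENNReal.ofReal (t / ∫ r in (0:ℝ)..t, w r) = ⊤ := by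
  have integral_pos : ∀ᶠ t in atTop, 0 < ∫ r in (0:ℝ)..t, w r := by
    filter_upwards [eventually_gt_atTop 0] with t ht
    exact intervalIntegral.intervalIntegral_pos_of_pos_on
      ((hw.mono Icc_subset_Ici_self).intervalIntegrable_of_Icc ht.le) (fun x hx ↦ hpos x hx.1) ht
  exact centroid_linear_growth_parabolic_general integral_pos
    ((eventually_ge_atTop s₀).mono hcent) s₀
end

section
/- Let w : [0,∞) → ℝ be a continuous function with w(t) > 0 for all t > 0, and suppose the limit L = lim_{s→∞} (1/s)·∫₀^s w(t) dt exists and is finite (the curve has confined centroid). Then ∫_1^∞ t/(∫₀^t w(r) dr) dt = +∞. Consequently an end of revolution in ℍ³ whose profile curve has confined centroid is parabolic. -/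
open MeasureTheory Set

/-! Parabolicity integrand and centroid are reciprocal: `t / ∫₀ᵗ w = (x_g t)⁻¹`. A bounded centroid
therefore keeps the integrand away from zero, and its integral over a half-line diverges. -/

open Filter
open scoped ENNReal

section Divergence

variable {α : Type*} [LinearOrder α] [TopologicalSpace α] [OrderClosedTopology α]
  [MeasurableSpace α] [OpensMeasurableSpace α] {μ : Measure α}

theorem setLIntegral_Ioi_eq_top_of_eventually_le (hμ : ∀ b, μ (Ioi b) = ∞) {f : α → ℝ≥0∞}
    {c : ℝ≥0∞} (hc : c ≠ 0) (hcf : ∀ᶠ x in atTop, c ≤ f x) (a : α) :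
    ∫⁻ x in Ioi a, f x ∂μ = ∞ := by
  obtain ⟨b, hab, hb⟩ := (atTop_basis' a).eventually_iff.1 hcf
  refine eq_top_iff.2 ?_
  calc
    ∞ = ∫⁻ _ in Ioi b, c ∂μ := by rw [setLIntegral_const, hμ, ENNReal.mul_top hc]
    _ ≤ ∫⁻ x in Ioi b, f x ∂μ := setLIntegral_mono' measurableSet_Ioi fun _ hx ↦ hb (le_of_lt hx)
    _ ≤ ∫⁻ x in Ioi a, f x ∂μ := lintegral_mono_set (Ioi_subset_Ioi hab)

theorem setLIntegral_Ioi_ofReal_inv_eq_top (hμ : ∀ b, μ (Ioi b) = ∞) {u : α → ℝ}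
    (hpos : ∀ᶠ x in atTop, 0 < u x) (hbdd : IsBoundedUnder (· ≤ ·) atTop u) (a : α) :
    ∫⁻ x in Ioi a, ENNReal.ofReal (u x)⁻¹ ∂μ = ∞ := by
  obtain ⟨C, hC⟩ := hbdd.eventually_le
  refine setLIntegral_Ioi_eq_top_of_eventually_le hμ (c := (ENNReal.ofReal C)⁻¹)
    (ENNReal.inv_ne_zero.2 ENNReal.ofReal_ne_top) ?_ a
  filter_upwards [hpos, hC] with x hx hxC
  rw [ENNReal.ofReal_inv_of_pos hx]
  exact ENNReal.inv_le_inv.2 (ENNReal.ofReal_le_ofReal hxC)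

end Divergence

theorem confined_centroid_parabolic_general {w : ℝ → ℝ}
    (hpos : ∀ᶠ t : ℝ in atTop, 0 < ∫ r in (0 : ℝ)..t, w r)
    (hbdd : IsBoundedUnder (· ≤ ·) atTop fun s : ℝ ↦ (1 / s) * ∫ t in (0 : ℝ)..s, w t) :
    ∫⁻ t in Ioi (1 : ℝ), ENNReal.ofReal (t / ∫ r in (0 : ℝ)..t, w r) = ∞ := by
  have hcentroid : ∀ᶠ s : ℝ in atTop, 0 < (1 / s) * ∫ t in (0 : ℝ)..s, w t := by
    filter_upwards [hpos, eventually_gt_atTop 0] with s hs hs0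
    positivity
  simpa only [one_div, mul_inv, inv_inv, ← div_eq_mul_inv] using
    setLIntegral_Ioi_ofReal_inv_eq_top (fun _ ↦ Real.volume_Ioi) hcentroid hbdd 1

/-- If the centroid `x_g(s) = (1/s)∫₀^s w` of the warping function has a finite
limit as `s → ∞` (confined centroid), then `∫_1^∞ t/(∫₀^t w) dt = ∞`,
so the corresponding end of revolution in ℍ³ is parabolic. -/
theorem confined_centroid_parabolic
    (w : ℝ → ℝ)
    (hw : ContinuousOn w (Ici (0:ℝ)))
    (hpos : ∀ t : ℝ, 0 < t → 0 < w t)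
    (L : ℝ)
    (hlim : Filter.Tendsto (fun s : ℝ => (1 / s) * ∫ t in (0:ℝ)..s, w t)
      Filter.atTop (nhds L)) :
    ∫⁻ t in Ioi (1:ℝ), ENNReal.ofReal (t / ∫ r in (0:ℝ)..t, w r) = ⊤ := by
  refine confined_centroid_parabolic_general ?_ hlim.isBoundedUnder_le
  filter_upwards [eventually_gt_atTop 0] with t ht
  exact intervalIntegral.intervalIntegral_pos_of_pos_on
    ((hw.mono Icc_subset_Ici_self).intervalIntegrable_of_Icc ht.le) (fun r hr ↦ hpos r hr.1) ht
end

section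
/- Fix a > 0 and define y_a : [0,∞) → ℝ by y_a(s) = a + ∫₀^s cosh(2a)·sinh(2t)/√(cosh²(2a)·cosh²(2t) − 1) dt. Then ∫₀^∞ 1/sinh(y_a(s)) ds < +∞. Consequently each end of the spherical catenoid in ℍ³, whose warping function is w₋₁(s) = sinh(y_a(s)), is non-parabolic. -/
open MeasureTheory Set

/-!
The integrand defining `y = y_a` is an exact derivative: with `c = cosh (2a)` it is half the
derivative of `arcosh (c * cosh (2t))`. Since `arcosh c = 2a`, the constants cancel and
`cosh (2y) = cosh (2a) * cosh (2s)`, that is,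
`sinh² y = sinh² a * cosh² s + cosh² a * sinh² s`. Hence the warping function `sinh y` is at least
`sinh a * cosh s`, which grows exponentially, and its reciprocal is integrable at infinity.
-/

section

open Real

theorem lintegral_Ioi_one_div_lt_top_of_mul_exp_le {w : ℝ → ℝ} {b c x : ℝ} (hb : 0 < b)
    (hc : 0 < c) (hw : ∀ s ∈ Ioi x, c * exp (b * s) ≤ w s) :
    ∫⁻ s in Ioi x, ENNReal.ofReal (1 / w s) < ⊤ := by
  have hint : IntegrableOn (fun s ↦ c⁻¹ * exp (-b * s)) (Ioi x) :=
    (integrableOn_exp_mul_Ioi (neg_neg_of_pos hb) x).const_mul c⁻¹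
  refine (setLIntegral_mono' measurableSet_Ioi fun s hs ↦ ?_).trans_lt hint.lintegral_lt_top
  refine ENNReal.ofReal_le_ofReal ?_
  calc 1 / w s ≤ 1 / (c * exp (b * s)) := one_div_le_one_div_of_le (by positivity) (hw s hs)
    _ = c⁻¹ * exp (-b * s) := by rw [one_div, mul_inv, neg_mul, exp_neg]

theorem exp_div_two_le_cosh (x : ℝ) : exp x / 2 ≤ cosh x := by
  rw [cosh_eq]
  linarith [exp_pos (-x)]

theorem one_lt_mul_cosh {c : ℝ} (hc : 1 < c) (t : ℝ) : 1 < c * cosh t :=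
  one_lt_mul_of_lt_of_le hc (one_le_cosh t)

theorem hasDerivAt_arcosh_mul_cosh {c : ℝ} (hc : 1 < c) (t : ℝ) :
    HasDerivAt (fun t ↦ arcosh (c * cosh t)) (c * sinh t / √(c ^ 2 * cosh t ^ 2 - 1)) t := by
  refine ((hasDerivAt_arcosh (one_lt_mul_cosh hc t)).comp t
    ((hasDerivAt_cosh t).const_mul c)).congr_deriv ?_
  rw [mul_pow, div_eq_inv_mul]

theorem continuous_mul_sinh_div_sqrt {c : ℝ} (hc : 1 < c) :
    Continuous fun t ↦ c * sinh t / √(c ^ 2 * cosh t ^ 2 - 1) := by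
  refine Continuous.div (by fun_prop) (by fun_prop) fun t ↦ (sqrt_pos.2 ?_).ne'
  rw [← mul_pow, sub_pos]
  exact one_lt_pow₀ (one_lt_mul_cosh hc t) two_ne_zero

theorem integral_mul_sinh_div_sqrt {c : ℝ} (hc : 1 < c) (u v : ℝ) :
    ∫ t in u..v, c * sinh t / √(c ^ 2 * cosh t ^ 2 - 1) =
      arcosh (c * cosh v) - arcosh (c * cosh u) :=
  intervalIntegral.integral_eq_sub_of_hasDerivAt (fun t _ ↦ hasDerivAt_arcosh_mul_cosh hc t)
    ((continuous_mul_sinh_div_sqrt hc).intervalIntegrable u v)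

/-- The function `y_a` of the spherical catenoid with parameter `a`. As `γ_a(s)` has horizontal
coordinate `e^Λ tanh y_a` and height `e^Λ / cosh y_a`, it is the hyperbolic distance from `γ_a(s)`
to the axis of revolution, and the warping function is `sinh (y_a s)`. -/
noncomputable def catenoidAxisDist (a s : ℝ) : ℝ :=
  a + ∫ t in (0 : ℝ)..s,
    cosh (2 * a) * sinh (2 * t) / √(cosh (2 * a) ^ 2 * cosh (2 * t) ^ 2 - 1)

theorem two_mul_catenoidAxisDist {a : ℝ} (ha : 0 < a) (s : ℝ) :
    2 * catenoidAxisDist a s = arcosh (cosh (2 * a) * cosh (2 * s)) := by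
  have hc : 1 < cosh (2 * a) := one_lt_cosh.2 (by positivity)
  have hsub := intervalIntegral.integral_comp_mul_left (a := 0) (b := s)
    (fun t ↦ cosh (2 * a) * sinh t / √(cosh (2 * a) ^ 2 * cosh t ^ 2 - 1)) (two_ne_zero (α := ℝ))
  rw [catenoidAxisDist, hsub, integral_mul_sinh_div_sqrt hc, mul_zero, cosh_zero, mul_one,
    arcosh_cosh (by positivity), smul_eq_mul]
  ring

theorem cosh_two_mul_catenoidAxisDist {a : ℝ} (ha : 0 < a) (s : ℝ) :
    cosh (2 * catenoidAxisDist a s) = cosh (2 * a) * cosh (2 * s) := by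
  rw [two_mul_catenoidAxisDist ha, cosh_arcosh]
  exact (one_lt_mul_cosh (one_lt_cosh.2 (by positivity)) _).le

theorem catenoidAxisDist_pos {a : ℝ} (ha : 0 < a) (s : ℝ) : 0 < catenoidAxisDist a s := by
  have h : 0 < 2 * catenoidAxisDist a s := by
    rw [two_mul_catenoidAxisDist ha]
    exact arcosh_pos (one_lt_mul_cosh (one_lt_cosh.2 (by positivity)) _)
  linarith

theorem sinh_catenoidAxisDist_sq {a : ℝ} (ha : 0 < a) (s : ℝ) :
    sinh (catenoidAxisDist a s) ^ 2 = sinh a ^ 2 * cosh s ^ 2 + cosh a ^ 2 * sinh s ^ 2 := by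
  have h := cosh_two_mul_catenoidAxisDist ha s
  simp only [cosh_two_mul, cosh_sq] at h ⊢
  linarith

theorem sinh_mul_cosh_le_sinh_catenoidAxisDist {a : ℝ} (ha : 0 < a) (s : ℝ) :
    sinh a * cosh s ≤ sinh (catenoidAxisDist a s) := by
  refine le_of_sq_le_sq ?_ (sinh_pos_iff.2 (catenoidAxisDist_pos ha s)).le
  rw [sinh_catenoidAxisDist_sq ha, mul_pow]
  exact le_add_of_nonneg_right (by positivity)

end

/-- The spherical catenoid in ℍ³: with
`y_a(s) = a + ∫₀^s cosh(2a)·sinh(2t)/√(cosh²(2a)cosh²(2t) − 1) dt`, one has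
`∫₀^∞ 1/sinh(y_a(s)) ds < ∞`, hence each end of the spherical catenoid is
non-parabolic. -/
theorem spherical_catenoid_nonparabolic
    (a : ℝ) (ha : 0 < a) :
    ∫⁻ s in Ioi (0:ℝ),
      ENNReal.ofReal (1 / Real.sinh (a + ∫ t in (0:ℝ)..s,
        Real.cosh (2 * a) * Real.sinh (2 * t) /
          Real.sqrt (Real.cosh (2 * a) ^ 2 * Real.cosh (2 * t) ^ 2 - 1))) < ⊤ := by
  have hsinh : 0 < Real.sinh a := Real.sinh_pos_iff.2 ha
  change ∫⁻ s in Ioi (0 : ℝ), ENNReal.ofReal (1 / Real.sinh (catenoidAxisDist a s)) < ⊤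
  refine lintegral_Ioi_one_div_lt_top_of_mul_exp_le one_pos (half_pos hsinh) fun s _ ↦ ?_
  calc Real.sinh a / 2 * Real.exp (1 * s) = Real.sinh a * (Real.exp s / 2) := by ring_nf
    _ ≤ Real.sinh a * Real.cosh s := by gcongr; exact exp_div_two_le_cosh s
    _ ≤ Real.sinh (catenoidAxisDist a s) := sinh_mul_cosh_le_sinh_catenoidAxisDist ha s
end
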